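/- Let γ ∈ ℝ, let n ≥ m ≥ 3 be integers, and let Z_1,…,Z_n be independent standard GP(γ) random variables. Define the Pickands kernel K_P(y_1,y_2,y_3) = ln((y_1−y_2)²/((y_1−y_3)(y_2−y_3))) for y_1 > y_2 > y_3, and K_{P,m}(x_1,…,x_m) = K_P(x_{m:m}, x_{m−1:m}, x_{m−2:m}). Then E[K_{P,m}(Z_1,…,Z_m)] = γ; consequently the U-statistic C(n,m)^{−1} Σ_{I ⊂ [n], |I| = m} K_{P,m}(Z_I) is an unbiased estimator of γ. -/

import Mathlib

open MeasureTheory ProbabilityTheory Filter Real Set Topology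
open scoped ENNReal NNReal Classical

noncomputable section

/-- The `j`-th largest entry of the tuple `x` (`j = 0` gives the maximum, `j = 1` the
second largest, ...); `0` when `j` is out of range. -/
def descStat {m : ℕ} (x : Fin m → ℝ) (j : ℕ) : ℝ :=
  if h : j < m then (x ∘ Tuple.sort x) ⟨m - 1 - j, by omega⟩ else 0

/-- The kernel of degree `m` obtained from `K` by applying it to the top-`q`
(descending) order statistics: `K_m(x_1,…,x_m) = K(x_{m:m},…,x_{m−q+1:m})`. -/
def Km {q : ℕ} (K : (Fin q → ℝ) → ℝ) (m : ℕ) (x : Fin m → ℝ) : ℝ :=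
  K fun j => descStat x (j : ℕ)

/-- `K(a x_1 + b, …, a x_q + b) = K(x_1, …, x_q)` for all `a > 0`, `b ∈ ℝ`. -/
def LocScaleInvariant {q : ℕ} (K : (Fin q → ℝ) → ℝ) : Prop :=
  ∀ a b : ℝ, 0 < a → ∀ x : Fin q → ℝ, K (fun j => a * x j + b) = K x

/-- `h_γ(y) = (y^γ - 1)/γ`, interpreted as `log y` when `γ = 0`. -/
def hGamma (γ : ℝ) (y : ℝ) : ℝ := if γ = 0 then Real.log y else (y ^ γ - 1) / γ

lemma measurable_hGamma (γ : ℝ) : Measurable (hGamma γ) := by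
  unfold hGamma
  split_ifs
  · exact Real.measurable_log
  · fun_prop

/-- The uniform distribution on `(0,1)`. -/
def unif01 : Measure ℝ := volume.restrict (Set.Ioo (0:ℝ) 1)

instance : IsProbabilityMeasure unif01 := ⟨by simp [unif01]⟩

/-- The standard Pareto(1) distribution, with cdf `1 - 1/y` for `y ≥ 1`. -/
def pareto1 : Measure ℝ := ProbabilityTheory.paretoMeasure 1 1

instance : IsProbabilityMeasure pareto1 :=
  ProbabilityTheory.isProbabilityMeasure_paretoMeasure one_pos one_pos

/-- The standard generalized Pareto distribution `GP(γ)`: the law of `h_γ(Y)` for `Y`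
standard Pareto(1). -/
def gpMeasure (γ : ℝ) : Measure ℝ := pareto1.map (hGamma γ)

instance (γ : ℝ) : IsProbabilityMeasure (gpMeasure γ) :=
  Measure.isProbabilityMeasure_map (measurable_hGamma γ).aemeasurable

/-- The unit exponential distribution: the law of `-log U` for `U` uniform on `(0,1)`. -/
def expMeasure1 : Measure ℝ := unif01.map fun u => -Real.log u

instance : IsProbabilityMeasure expMeasure1 :=
  Measure.isProbabilityMeasure_map Real.measurable_log.neg.aemeasurable

/-- The Erlang(q) distribution: the law of the sum of `q` independent unit exponentials. -/
def erlangMeasure (q : ℕ) : Measure ℝ :=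
  (Measure.pi fun _ : Fin q => expMeasure1).map fun e => ∑ i, e i

instance (q : ℕ) : IsProbabilityMeasure (erlangMeasure q) :=
  Measure.isProbabilityMeasure_map
    (Finset.measurable_sum _ fun i _ => measurable_pi_apply i).aemeasurable

/-- The joint law of `r` iid `GP(γ)` random variables. -/
def gpPi (γ : ℝ) (r : ℕ) : Measure (Fin r → ℝ) := Measure.pi fun _ => gpMeasure γ

instance (γ : ℝ) (r : ℕ) : IsProbabilityMeasure (gpPi γ r) := by
  unfold gpPi; infer_instance

/-- The vector `(Z_{q-j:q-1})_{j=1}^{q}`: the descending order statistics of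
`z_1,…,z_{q-1}` with an extra last entry `Z_{0:q-1} := 0`. -/
def refVec {q : ℕ} (z : Fin (q-1) → ℝ) : Fin q → ℝ := fun j => descStat z (j : ℕ)

/-- `θ = E[K((Z_{q-j:q-1})_{j=1}^{q})]` for iid `GP(γ)` variables `Z_1,…,Z_{q-1}`. -/
def thetaK (γ : ℝ) {q : ℕ} (K : (Fin q → ℝ) → ℝ) : ℝ :=
  ∫ z, K (refVec z) ∂(gpPi γ (q-1))

/-- all moments of `K((Z_{q-j:q-1})_{j=1}^{q})` are finite. -/
def MomentCond (γ : ℝ) {q : ℕ} (K : (Fin q → ℝ) → ℝ) : Prop :=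
  ∀ p : ℝ, 0 < p →
    ∫⁻ z, ENNReal.ofReal (|K (refVec z)| ^ p) ∂(gpPi γ (q-1)) < ⊤

/-- The asymptotic variance
`σ²_K(γ) = ∫_0^∞ (E[K̄_{q+1}((Z_{q-j:q-1})_{j=1}^q, h_γ(S_q/x))])² dx`. -/
def sigmaSqK (γ : ℝ) {q : ℕ} (K : (Fin q → ℝ) → ℝ) : ℝ :=
  ∫ x in Set.Ioi (0:ℝ),
    (∫ zs : (Fin (q-1) → ℝ) × ℝ,
        (Km K (q+1) (Fin.snoc (refVec zs.1) (hGamma γ (zs.2 / x))) - thetaK γ K)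
      ∂((gpPi γ (q-1)).prod (erlangMeasure q))) ^ 2

/-- The U-statistic with kernel `K_m` evaluated on the sample `z`. -/
def UStat {q : ℕ} (K : (Fin q → ℝ) → ℝ) (m n : ℕ) (z : Fin n → ℝ) : ℝ :=
  ((n.choose m : ℝ))⁻¹ *
    ∑ I ∈ Finset.powersetCard m (Finset.univ : Finset (Fin n)),
      Km K I.card fun j => z (I.orderIsoOfFin rfl j).1

/-- Condition on the degree sequence: `m = o(n^{1-ε})` and `log n = o(m^{1-δ})`. -/
def DegreeCond (m : ℕ → ℕ) : Prop :=
  ∃ ε > (0:ℝ), ∃ δ > (0:ℝ),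
    Tendsto (fun n => (m n : ℝ) / (n : ℝ) ^ (1 - ε)) atTop (𝓝 0) ∧
    Tendsto (fun n : ℕ => Real.log n / (m n : ℝ) ^ (1 - δ)) atTop (𝓝 0)

/-- `ζ_{m,ℓ} = cov(K_m(Z_S), K_m(Z_{S'}))` for the blocks `S = [1:m]`,
`S' = [(m-ℓ+1):(2m-ℓ)]` (zero-indexed here), which overlap in `ℓ` indices. -/
def zetaCov {Ω : Type*} [MeasurableSpace Ω] (P : Measure Ω) {q : ℕ}
    (K : (Fin q → ℝ) → ℝ) (Z : ℕ → Ω → ℝ) (m ℓ : ℕ) : ℝ :=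
  (∫ ω, Km K m (fun i : Fin m => Z i ω) * Km K m (fun i : Fin m => Z (m - ℓ + i) ω) ∂P)
    - (∫ ω, Km K m (fun i : Fin m => Z i ω) ∂P)
      * (∫ ω, Km K m (fun i : Fin m => Z (m - ℓ + i) ω) ∂P)

/-- Convergence in distribution to a Gaussian, expressed via pointwise convergence of
the cumulative distribution functions (the Gaussian cdf being continuous). -/
def TendstoGaussian {Ω : Type*} [MeasurableSpace Ω] (P : Measure Ω)
    (T : ℕ → Ω → ℝ) (μ : ℝ) (v : ℝ≥0) : Prop :=
  ∀ x : ℝ, Tendsto (fun n => (P {ω | T n ω ≤ x}).toReal) atTop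
    (𝓝 ((gaussianReal μ v (Set.Iic x)).toReal))

/-- Convergence in probability to the constant `c`. -/
def TendstoInProb {Ω : Type*} [MeasurableSpace Ω] (P : Measure Ω)
    (T : ℕ → Ω → ℝ) (c : ℝ) : Prop :=
  ∀ ε : ℝ, 0 < ε → Tendsto (fun n => (P {ω | ε ≤ |T n ω - c|}).toReal) atTop (𝓝 0)


/-- The Pickands kernel `K_P(y₁,y₂,y₃) = ln((y₁-y₂)²/((y₁-y₃)(y₂-y₃)))`. -/
def KP : (Fin 3 → ℝ) → ℝ :=
  fun y => Real.log ((y 0 - y 1) ^ 2 / ((y 0 - y 2) * (y 1 - y 2)))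


lemma pk_pareto : pareto1 = unif01.map (fun u => u⁻¹) := by
  ext A hA
  have hm : Measurable (fun u : ℝ => u⁻¹) := measurable_inv
  rw [Measure.map_apply hm hA, unif01, Measure.restrict_apply (hm hA), pareto1, paretoMeasure,
    withDensity_apply _ hA]
  have himg : (fun u : ℝ => u⁻¹) ⁻¹' A ∩ Ioo 0 1 = (fun u : ℝ => u⁻¹) '' (A ∩ Ioi 1) := by
    ext x
    constructor
    · rintro ⟨h1, h2, h3⟩
      exact ⟨x⁻¹, ⟨h1, (one_lt_inv₀ h2).2 h3⟩, inv_inv x⟩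
    · rintro ⟨y, ⟨h1, h2⟩, rfl⟩
      have h2' : (1:ℝ) < y := h2
      refine ⟨by simpa using h1, by positivity, inv_lt_one_of_one_lt₀ h2'⟩
  have hcv := lintegral_image_eq_lintegral_abs_deriv_mul (s := A ∩ Ioi 1)
    (f := fun u : ℝ => u⁻¹) (f' := fun x => -(x ^ 2)⁻¹) (hA.inter measurableSet_Ioi)
    (fun x hx => (hasDerivAt_inv (ne_of_gt (lt_trans one_pos hx.2))).hasDerivWithinAt)
    (inv_injective.injOn) (fun _ => 1)
  rw [himg, ← setLIntegral_one, hcv]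
  rw [← lintegral_indicator hA, ← lintegral_indicator (hA.inter measurableSet_Ioi)]
  apply lintegral_congr_ae
  have : ∀ᵐ x : ℝ, x ≠ 1 := by simp [ae_iff]
  filter_upwards [this] with x hx
  by_cases h1 : x ∈ A
  · by_cases h2 : 1 < x
    · have h3 : x ∈ A ∩ Ioi 1 := ⟨h1, h2⟩
      rw [indicator_of_mem h1, indicator_of_mem h3, paretoPDF_of_le h2.le]
      have : (0:ℝ) < x := by linarith
      rw [abs_neg, abs_of_pos (by positivity)]
      simp only [one_rpow, mul_one, one_mul]
      congr 1
      rw [rpow_neg this.le]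
      norm_num
    · have h3 : x ∉ A ∩ Ioi 1 := fun h => h2 h.2
      rw [indicator_of_mem h1, indicator_of_notMem h3, paretoPDF_of_lt]
      exact lt_of_le_of_ne (not_lt.1 h2) hx
  · have h3 : x ∉ A ∩ Ioi 1 := fun h => h1 h.1
    rw [indicator_of_notMem h1, indicator_of_notMem h3]

lemma pk_hderiv (γ : ℝ) {y : ℝ} (hy : 0 < y) : HasDerivAt (hGamma γ) (y ^ (γ - 1)) y := by
  by_cases h : γ = 0
  · have : hGamma γ = Real.log := by ext; simp [hGamma, h]
    rw [this, h, zero_sub, rpow_neg_one]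
    exact Real.hasDerivAt_log hy.ne'
  · have : hGamma γ = fun y => (y ^ γ - 1) / γ := by ext; simp [hGamma, h]
    rw [this]
    have := ((Real.hasDerivAt_rpow_const (p := γ) (Or.inl hy.ne')).sub_const 1).div_const γ
    convert! this using 1
    rw [mul_div_cancel_left₀ _ h]

lemma pk_hone (γ : ℝ) : hGamma γ 1 = 0 := by simp [hGamma]

lemma pk_hmono (γ : ℝ) : StrictMonoOn (hGamma γ) (Ioi 0) := by
  apply strictMonoOn_of_deriv_pos (convex_Ioi 0)
  · intro y hy
    exact (pk_hderiv γ hy).continuousAt.continuousWithinAt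
  · intro y hy
    rw [interior_Ioi] at hy
    rw [(pk_hderiv γ hy).deriv]
    exact rpow_pos_of_pos hy _

/-- the function `w ↦ log h_γ(1/w)` -/
def pkg (γ w : ℝ) : ℝ := Real.log (hGamma γ w⁻¹)

lemma pk_meas_g (γ : ℝ) : Measurable (pkg γ) :=
  Real.measurable_log.comp ((measurable_hGamma γ).comp measurable_inv)

lemma pk_gbound (γ : ℝ) {w : ℝ} (h0 : 0 < w) (h1 : w < 1) :
    |pkg γ w| ≤ |Real.log (1 - w)| + (1 + |γ - 1|) * |Real.log w| := by
  have hy : 1 < w⁻¹ := (one_lt_inv₀ h0).2 h1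
  obtain ⟨c, hc, hce⟩ := exists_hasDerivAt_eq_slope (hGamma γ) (fun y => y ^ (γ - 1)) hy
    (fun y hy => (pk_hderiv γ (lt_of_lt_of_le one_pos hy.1)).continuousAt.continuousWithinAt)
    (fun y hy => pk_hderiv γ (lt_trans one_pos hy.1))
  rw [pk_hone, sub_zero, eq_div_iff (by linarith)] at hce
  have hcpos : 0 < c := lt_trans one_pos hc.1
  have e1 : pkg γ w = (γ - 1) * Real.log c + (Real.log (1 - w) - Real.log w) := by
    rw [pkg, ← hce, Real.log_mul (rpow_pos_of_pos hcpos _).ne' (by linarith),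
      Real.log_rpow hcpos, ← Real.log_div (by linarith) h0.ne']
    congr 2
    field_simp
  have hlc : |Real.log c| ≤ |Real.log w| := by
    rw [abs_of_pos (Real.log_pos hc.1), abs_of_neg (Real.log_neg h0 h1), ← Real.log_inv]
    exact Real.log_le_log hcpos hc.2.le
  rw [e1]
  have a1 := abs_add_le ((γ - 1) * Real.log c) (Real.log (1 - w) - Real.log w)
  have a2 := abs_sub (Real.log (1 - w)) (Real.log w)
  rw [abs_mul] at a1
  nlinarith [mul_le_mul_of_nonneg_left hlc (abs_nonneg (γ - 1))]

lemma pk_logint : IntegrableOn Real.log (Ioo 0 1) := by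
  have h := intervalIntegral.intervalIntegrable_log' (a := 0) (b := 1)
  rw [intervalIntegrable_iff_integrableOn_Ioo_of_le zero_le_one] at h
  exact h

lemma pk_gint (γ : ℝ) : IntegrableOn (pkg γ) (Ioo 0 1) := by
  have h1 : IntegrableOn (fun w => Real.log (1 - w)) (Ioo 0 1) := by
    have h := (intervalIntegral.intervalIntegrable_log' (a := 0) (b := 1)).comp_sub_left 1
    rw [← intervalIntegrable_iff_integrableOn_Ioo_of_le zero_le_one]
    simpa using h.symm
  have h2 : Integrable (fun w => |Real.log (1 - w)| + (1 + |γ - 1|) * |Real.log w|)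
      (volume.restrict (Ioo 0 1)) := h1.abs.add (pk_logint.abs.const_mul _)
  refine h2.mono' (pk_meas_g γ).aestronglyMeasurable ?_
  filter_upwards [ae_restrict_mem measurableSet_Ioo] with w hw
  exact pk_gbound γ hw.1 hw.2

lemma pk_slice (l r : ℝ → ℝ) (ψ : ℝ × ℝ → ℝ) (A B : ℝ → ℝ) (T : Set (ℝ × ℝ))
    (hT : T = {p | p.2 ∈ Ioo 0 1 ∧ p.1 ∈ Ioo (l p.2) (r p.2)}) (hTm : MeasurableSet T)
    (hψ : Measurable ψ)
    (h1 : ∀ t ∈ Ioo (0:ℝ) 1, IntegrableOn (fun s => ψ (s, t)) (Ioo (l t) (r t)))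
    (hA : ∀ t ∈ Ioo (0:ℝ) 1, ∫ s in Ioo (l t) (r t), ‖ψ (s, t)‖ = A t)
    (hB : ∀ t ∈ Ioo (0:ℝ) 1, ∫ s in Ioo (l t) (r t), ψ (s, t) = B t)
    (hAi : IntegrableOn A (Ioo 0 1)) :
    IntegrableOn ψ T ∧ ∫ p in T, ψ p = ∫ t in Ioo 0 1, B t := by
  have hs : ∀ t ∈ Ioo (0:ℝ) 1, ∀ s, T.indicator ψ (s, t)
      = (Ioo (l t) (r t)).indicator (fun s => ψ (s, t)) s := by
    intro t ht s
    by_cases h : s ∈ Ioo (l t) (r t)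
    · rw [indicator_of_mem h, indicator_of_mem (by rw [hT]; exact ⟨ht, h⟩)]
    · rw [indicator_of_notMem h, indicator_of_notMem (by rw [hT]; exact fun h' => h h'.2)]
  have hn : ∀ t ∉ Ioo (0:ℝ) 1, ∀ s, T.indicator ψ (s, t) = 0 := by
    intro t ht s
    rw [indicator_of_notMem (by rw [hT]; exact fun h' => ht h'.1)]
  have hint : Integrable (T.indicator ψ) (volume.prod volume) := by
    rw [integrable_prod_iff' (hψ.indicator hTm).aestronglyMeasurable]
    constructor
    · refine ae_of_all _ fun t => ?_
      by_cases ht : t ∈ Ioo (0:ℝ) 1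
      · simp_rw [hs t ht]
        exact (integrable_indicator_iff measurableSet_Ioo).2 (h1 t ht)
      · simp_rw [hn t ht]
        exact integrable_zero _ _ _
    · rw [← integrable_indicator_iff measurableSet_Ioo] at hAi
      refine hAi.congr (ae_of_all _ fun t => ?_)
      show (Ioo (0:ℝ) 1).indicator A t = ∫ s, ‖T.indicator ψ (s, t)‖
      by_cases ht : t ∈ Ioo (0:ℝ) 1
      · simp_rw [hs t ht, norm_indicator_eq_indicator_norm]
        rw [integral_indicator measurableSet_Ioo, hA t ht, indicator_of_mem ht]
      · simp_rw [hn t ht]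
        rw [indicator_of_notMem ht]; simp
  constructor
  · exact (integrable_indicator_iff hTm).1 hint
  · rw [← integral_indicator hTm, Measure.volume_eq_prod, integral_prod_symm _ hint,
      ← integral_indicator measurableSet_Ioo]
    congr 1
    ext t
    by_cases ht : t ∈ Ioo (0:ℝ) 1
    · simp_rw [hs t ht]
      rw [integral_indicator measurableSet_Ioo, hB t ht, indicator_of_mem ht]
    · simp_rw [hn t ht]
      rw [indicator_of_notMem ht]; simp

/-- the triangle -/
def pkT : Set (ℝ × ℝ) := {p | 0 < p.1 ∧ p.1 < p.2 ∧ p.2 < 1}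

lemma pk_measT : MeasurableSet pkT :=
  (measurableSet_lt measurable_const measurable_fst).inter
    ((measurableSet_lt measurable_fst measurable_snd).inter
      (measurableSet_lt measurable_snd measurable_const))

lemma pkT_eq : pkT = {p | p.2 ∈ Ioo 0 1 ∧ p.1 ∈ Ioo ((fun _ => 0 : ℝ → ℝ) p.2) (id p.2)} := by
  ext p
  simp only [pkT, mem_ofPred_eq, mem_Ioo, id]
  constructor
  · rintro ⟨a, b, c⟩; exact ⟨⟨a.trans b, c⟩, a, b⟩
  · rintro ⟨⟨a, b⟩, c, d⟩; exact ⟨c, d, b⟩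

lemma pk_idmul {φ : ℝ → ℝ} (hi : IntegrableOn φ (Ioo 0 1)) :
    IntegrableOn (fun t => t * φ t) (Ioo 0 1) := by
  refine Integrable.bdd_mul (c := 1) hi measurable_id.aestronglyMeasurable ?_
  filter_upwards [ae_restrict_mem measurableSet_Ioo] with w hw
  simp only [norm_eq_abs]
  rw [abs_le]; constructor <;> linarith [hw.1, hw.2]

lemma pk_snd {φ : ℝ → ℝ} (hφ : Measurable φ) (hi : IntegrableOn φ (Ioo 0 1)) :
    IntegrableOn (fun p : ℝ × ℝ => φ p.2) pkT ∧
      ∫ p in pkT, φ p.2 = ∫ t in Ioo 0 1, t * φ t := by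
  refine pk_slice (fun _ => 0) id (fun p => φ p.2) (fun t => t * |φ t|) _ _ pkT_eq pk_measT
    (hφ.comp measurable_snd) ?_ ?_ ?_ (pk_idmul hi.abs)
  · intro t ht
    simp
  · intro t ht
    simp [ht.1.le]
  · intro t ht
    simp [ht.1.le]

lemma pk_fst {φ : ℝ → ℝ} (hφ : Measurable φ) (hi : IntegrableOn φ (Ioo 0 1)) :
    IntegrableOn (fun p : ℝ × ℝ => φ p.1) pkT ∧
      ∫ p in pkT, φ p.1 = ∫ t in Ioo 0 1, (1 - t) * φ t := by
  have hmp : MeasurePreserving (Prod.swap : ℝ × ℝ → ℝ × ℝ) volume volume :=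
    Measure.measurePreserving_swap
  have hemb : MeasurableEmbedding (Prod.swap : ℝ × ℝ → ℝ × ℝ) :=
    MeasurableEquiv.prodComm.measurableEmbedding
  have key := pk_slice id (fun _ => 1) (fun p => φ p.2) (fun t => (1 - t) * |φ t|)
    (fun t => (1 - t) * φ t) (Prod.swap ⁻¹' pkT) ?_ (measurable_swap pk_measT)
    (hφ.comp measurable_snd) ?_ ?_ ?_ ?_
  · have e1 := hmp.integrableOn_comp_preimage hemb (f := fun p : ℝ × ℝ => φ p.1) (s := pkT)
    have e2 := hmp.setIntegral_preimage_emb hemb (fun p : ℝ × ℝ => φ p.1) pkT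
    exact ⟨e1.1 key.1, e2.symm.trans key.2⟩
  · ext p
    simp only [pkT, mem_ofPred_eq, mem_Ioo, id, mem_preimage, Prod.fst_swap, Prod.snd_swap]
    constructor
    · rintro ⟨a, b, c⟩; exact ⟨⟨a, b.trans c⟩, b, c⟩
    · rintro ⟨⟨a, b⟩, c, d⟩; exact ⟨a, c, d⟩
  · intro t ht
    simp
  · intro t ht
    simp [ht.2.le]
  · intro t ht
    simp [ht.2.le]
  · have := hi.abs.sub (pk_idmul hi.abs)
    refine this.congr (ae_of_all _ fun t => ?_)
    simp; ring

lemma pk_div {φ : ℝ → ℝ} (hφ : Measurable φ) (hi : IntegrableOn φ (Ioo 0 1)) :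
    IntegrableOn (fun p : ℝ × ℝ => φ (p.1 / p.2)) pkT ∧
      ∫ p in pkT, φ (p.1 / p.2) = (∫ t in Ioo 0 1, φ t) / 2 := by
  have hsc : ∀ f : ℝ → ℝ, ∀ t ∈ Ioo (0:ℝ) 1,
      ∫ s in Ioo 0 t, f (s / t) = t * ∫ s in Ioo 0 1, f s := by
    intro f t ht
    rw [← integral_Ioc_eq_integral_Ioo, ← integral_Ioc_eq_integral_Ioo,
      ← intervalIntegral.integral_of_le ht.1.le, ← intervalIntegral.integral_of_le zero_le_one,
      intervalIntegral.integral_comp_div _ ht.1.ne']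
    simp [ht.1.ne']
  have key := pk_slice (fun _ => 0) id (fun p => φ (p.1 / p.2)) (fun t => t * ∫ s in Ioo 0 1, |φ s|)
    (fun t => t * ∫ s in Ioo 0 1, φ s) _ pkT_eq pk_measT
    (hφ.comp (measurable_fst.div measurable_snd)) ?_ ?_ ?_ ?_
  · refine ⟨key.1, key.2.trans ?_⟩
    rw [integral_mul_const, ← integral_Ioc_eq_integral_Ioo,
      ← intervalIntegral.integral_of_le zero_le_one]
    simp
    ring
  · intro t ht
    have ht0 : (0:ℝ) < t := ht.1
    have h := hi
    rw [← intervalIntegrable_iff_integrableOn_Ioo_of_le zero_le_one] at h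
    have h' := IntervalIntegrable.comp_mul_right h (c := t⁻¹)
    simp only [zero_div, one_div, inv_inv, id, ← div_eq_mul_inv] at h' ⊢
    rwa [intervalIntegrable_iff_integrableOn_Ioo_of_le ht0.le] at h'
  · intro t ht
    exact hsc (fun x => |φ x|) t ht
  · intro t ht
    exact hsc φ t ht
  · exact (pk_idmul (φ := fun _ => ∫ s in Ioo 0 1, |φ s|) (by simp))

lemma pk_intid : ∫ t in Ioo (0:ℝ) 1, t = 1 / 2 := by
  rw [← integral_Ioc_eq_integral_Ioo, ← intervalIntegral.integral_of_le zero_le_one]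
  simp

lemma pk_intlog : ∫ t in Ioo (0:ℝ) 1, Real.log t = -1 := by
  rw [← integral_Ioc_eq_integral_Ioo, ← intervalIntegral.integral_of_le zero_le_one, integral_log]
  simp

lemma pk_subid {φ : ℝ → ℝ} (hi : IntegrableOn φ (Ioo 0 1)) :
    ∫ t in Ioo (0:ℝ) 1, (1 - t) * φ t = (∫ t in Ioo (0:ℝ) 1, φ t) -
      ∫ t in Ioo (0:ℝ) 1, t * φ t := by
  rw [← integral_sub hi (pk_idmul hi)]
  congr 1; ext t; ring

lemma pk_inttlog : ∫ t in Ioo (0:ℝ) 1, t * Real.log t = -1 / 4 := by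
  have a := pk_div Real.measurable_log pk_logint
  have b := pk_fst Real.measurable_log pk_logint
  have c := pk_snd Real.measurable_log pk_logint
  have e : ∫ p in pkT, Real.log (p.1 / p.2) = ∫ p in pkT, (Real.log p.1 - Real.log p.2) := by
    refine setIntegral_congr_fun pk_measT fun p hp => ?_
    exact Real.log_div hp.1.ne' (hp.1.trans hp.2.1).ne'
  rw [integral_sub b.1 c.1, a.2, b.2, c.2, pk_subid pk_logint, pk_intlog] at e
  linarith

/-- the reduced kernel minus `γ` -/
def pkF (γ : ℝ) (p : ℝ × ℝ) : ℝ :=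
  2 * pkg γ (p.1 / p.2) - pkg γ p.1 - pkg γ p.2 - 2 * γ * Real.log p.2 - γ

lemma pk_measF (γ : ℝ) : Measurable (pkF γ) := by
  have := pk_meas_g γ
  unfold pkF
  fun_prop

lemma pk_F (γ : ℝ) : IntegrableOn (pkF γ) pkT ∧ ∫ p in pkT, pkF γ p = 0 := by
  have hg := pk_meas_g γ
  have hi := pk_gint γ
  have a := pk_div hg hi
  have b := pk_fst hg hi
  have c := pk_snd hg hi
  have d := pk_snd Real.measurable_log pk_logint
  have o := pk_snd (φ := fun _ => γ) measurable_const (by simp)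
  have i1 := a.1.const_mul 2
  have i2 : Integrable (fun p : ℝ × ℝ => 2 * pkg γ (p.1 / p.2) - pkg γ p.1)
    (volume.restrict pkT) := i1.sub b.1
  have i3 : Integrable (fun p : ℝ × ℝ => 2 * pkg γ (p.1 / p.2) - pkg γ p.1 - pkg γ p.2)
    (volume.restrict pkT) := i2.sub c.1
  have i4 : Integrable (fun p : ℝ × ℝ => 2 * pkg γ (p.1 / p.2) - pkg γ p.1 - pkg γ p.2
    - 2 * γ * Real.log p.2) (volume.restrict pkT) := i3.sub (d.1.const_mul (2 * γ))
  refine ⟨i4.sub o.1, ?_⟩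
  have e : ∫ p in pkT, pkF γ p = 2 * (∫ p in pkT, pkg γ (p.1 / p.2)) - (∫ p in pkT, pkg γ p.1)
      - (∫ p in pkT, pkg γ p.2) - 2 * γ * (∫ p in pkT, Real.log p.2) - ∫ p in pkT, γ := by
    rw [← integral_const_mul, ← integral_const_mul, ← integral_sub i1 b.1, ← integral_sub i2 c.1,
      ← integral_sub i3 (d.1.const_mul (2 * γ)), ← integral_sub i4 o.1]
    rfl
  rw [e, a.2, b.2, c.2, d.2, o.2, pk_subid hi, pk_inttlog, integral_mul_const, pk_intid]
  ring

lemma pk_hdiff (γ : ℝ) {a b : ℝ} (ha : 0 < a) (hb : 0 < b) :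
    hGamma γ a⁻¹ - hGamma γ b⁻¹ = b ^ (-γ) * hGamma γ (a / b)⁻¹ := by
  by_cases h : γ = 0
  · simp only [hGamma, h, if_true, neg_zero, rpow_zero, one_mul, Real.log_inv]
    rw [Real.log_div ha.ne' hb.ne']; ring
  · simp only [hGamma, h, if_false]
    rw [inv_div, Real.div_rpow hb.le ha.le, Real.inv_rpow ha.le, Real.inv_rpow hb.le,
      Real.rpow_neg hb.le]
    have := rpow_pos_of_pos ha γ
    have := rpow_pos_of_pos hb γ
    field_simp
    ring

lemma pk_hpos (γ : ℝ) {a b : ℝ} (ha : 0 < a) (hab : a < b) : 0 < hGamma γ (a / b)⁻¹ := by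
  rw [← pk_hone γ]
  have hb := ha.trans hab
  apply pk_hmono γ (by simp : (1:ℝ) ∈ Ioi (0:ℝ)) (by simp; positivity)
  rw [inv_div]
  exact (one_lt_div ha).2 hab

lemma pk_KP (γ : ℝ) {a b c : ℝ} (ha : 0 < a) (hab : a < b) (hbc : b < c) :
    KP ![hGamma γ a⁻¹, hGamma γ b⁻¹, hGamma γ c⁻¹] - γ = pkF γ (a / c, b / c) := by
  have hb := ha.trans hab
  have hc := hb.trans hbc
  have h1 := pk_hpos γ ha hab
  have h2 := pk_hpos γ ha (hab.trans hbc)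
  have h3 := pk_hpos γ hb hbc
  have p1 := rpow_pos_of_pos hb (-γ)
  have p2 := rpow_pos_of_pos hc (-γ)
  have e : KP ![hGamma γ a⁻¹, hGamma γ b⁻¹, hGamma γ c⁻¹] =
    Real.log ((hGamma γ a⁻¹ - hGamma γ b⁻¹) ^ 2 /
      ((hGamma γ a⁻¹ - hGamma γ c⁻¹) * (hGamma γ b⁻¹ - hGamma γ c⁻¹))) := rfl
  rw [e, pk_hdiff γ ha hb, pk_hdiff γ ha hc, pk_hdiff γ hb hc]
  have e2 : a / c / (b / c) = a / b := by field_simp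
  simp only [pkF, pkg, e2]
  rw [Real.log_div (by positivity) (by positivity), Real.log_pow,
    Real.log_mul (by positivity) (by positivity), Real.log_mul (by positivity) (by positivity),
    Real.log_mul (by positivity) (by positivity), Real.log_mul (by positivity) (by positivity),
    Real.log_rpow hb, Real.log_rpow hc, Real.log_div hb.ne' hc.ne']
  push_cast
  ring

/-- `i, j, k` are the indices of the three largest entries. -/
def pkE {m : ℕ} (x : Fin m → ℝ) (i j k : Fin m) : Prop :=
  x k < x j ∧ x j < x i ∧ ∀ l, l ≠ i → l ≠ j → l ≠ k → x l < x k

/-- one summand -/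
def pkS (γ : ℝ) {m : ℕ} (i j k : Fin m) (x : Fin m → ℝ) : ℝ :=
  if pkE x i j k then KP ![x i, x j, x k] - γ else 0

lemma pk_measE {m : ℕ} (i j k : Fin m) : MeasurableSet {x : Fin m → ℝ | pkE x i j k} := by
  have h : ∀ a b : Fin m, MeasurableSet {x : Fin m → ℝ | x a < x b} := fun a b =>
    measurableSet_lt (measurable_pi_apply a) (measurable_pi_apply b)
  have e : {x : Fin m → ℝ | pkE x i j k} = {x | x k < x j} ∩ ({x | x j < x i} ∩
      ⋂ l, ⋂ (_ : l ≠ i), ⋂ (_ : l ≠ j), ⋂ (_ : l ≠ k), {x | x l < x k}) := by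
    ext x; simp [pkE]
  rw [e]
  exact (h _ _).inter ((h _ _).inter (MeasurableSet.iInter fun l => MeasurableSet.iInter fun _ =>
    MeasurableSet.iInter fun _ => MeasurableSet.iInter fun _ => h _ _))

lemma pk_measS (γ : ℝ) {m : ℕ} (i j k : Fin m) : Measurable (pkS γ i j k) := by
  unfold pkS
  refine Measurable.ite (pk_measE i j k) ?_ measurable_const
  unfold KP
  simp only [Matrix.cons_val_zero, Matrix.cons_val_one, Matrix.cons_val]
  fun_prop

lemma pk_uniq {m : ℕ} {x : Fin m → ℝ} {i j k i' j' k' : Fin m} (h : pkE x i j k)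
    (h' : pkE x i' j' k') : i = i' ∧ j = j' ∧ k = k' := by
  obtain ⟨a, b, c⟩ := h
  obtain ⟨a', b', c'⟩ := h'
  have hi : i = i' := by
    by_contra hne
    have q : x i < x i' := by
      by_cases h1 : i = j'
      · rw [h1]; exact b'
      · by_cases h2 : i = k'
        · rw [h2]; linarith
        · linarith [c' i hne h1 h2]
    have q' : x i' < x i := by
      by_cases h1 : i' = j
      · rw [h1]; exact b
      · by_cases h2 : i' = k
        · rw [h2]; linarith
        · linarith [c i' (Ne.symm hne) h1 h2]
    linarith
  subst hi
  have hj : j = j' := by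
    by_contra hne
    have n1 : j ≠ i := fun h => by rw [h] at b; exact lt_irrefl _ b
    have n2 : j' ≠ i := fun h => by rw [h] at b'; exact lt_irrefl _ b'
    have q : x j < x j' := by
      by_cases h2 : j = k'
      · rw [h2]; linarith
      · linarith [c' j n1 hne h2]
    have q' : x j' < x j := by
      by_cases h2 : j' = k
      · rw [h2]; linarith
      · linarith [c j' n2 (Ne.symm hne) h2]
    linarith
  subst hj
  refine ⟨rfl, rfl, ?_⟩
  by_contra hne
  have n1 : k ≠ i := fun h => by rw [h] at a; linarith
  have n2 : k ≠ j := fun h => by rw [h] at a; linarith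
  have n3 : k' ≠ i := fun h => by rw [h] at a'; linarith
  have n4 : k' ≠ j := fun h => by rw [h] at a'; linarith
  linarith [c' k n1 n2 hne, c k' n3 n4 (Ne.symm hne)]

lemma pk_Km (γ : ℝ) {m : ℕ} (hm : 3 ≤ m) {x : Fin m → ℝ} (hx : Function.Injective x) :
    Km KP m x - γ = ∑ p : Fin m × Fin m × Fin m, pkS γ p.1 p.2.1 p.2.2 x := by
  set σ := Tuple.sort x with hσ
  have hmono : StrictMono (x ∘ σ) :=
    (Tuple.monotone_sort x).strictMono_of_injective (hx.comp σ.injective)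
  set a : Fin m := ⟨m - 1, by omega⟩ with ha
  set b : Fin m := ⟨m - 2, by omega⟩ with hb
  set c : Fin m := ⟨m - 3, by omega⟩ with hc
  have hE : pkE x (σ a) (σ b) (σ c) := by
    refine ⟨hmono (by simp [hb, hc, Fin.lt_def]; omega), hmono (by simp [hb, ha, Fin.lt_def]; omega),
      fun l h1 h2 h3 => ?_⟩
    obtain ⟨d, rfl⟩ := σ.surjective l
    apply hmono
    have g1 : d ≠ a := fun h => h1 (by rw [h])
    have g2 : d ≠ b := fun h => h2 (by rw [h])
    have g3 : d ≠ c := fun h => h3 (by rw [h])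
    simp only [ha, hb, hc, ne_eq, Fin.ext_iff] at g1 g2 g3
    rw [Fin.lt_def]
    simp only [hc]
    have := d.2
    omega
  rw [Finset.sum_eq_single (σ a, σ b, σ c)]
  · simp only [pkS, if_pos hE]
    congr 1
    unfold Km
    congr 1
    ext t
    fin_cases t
    · simp [descStat, show 0 < m by omega, ha, hσ]
    · simp [descStat, show 1 < m by omega, hb, hσ, show m - 1 - 1 = m - 2 by omega]
    · simp [descStat, show 2 < m by omega, hc, hσ, show m - 1 - 2 = m - 3 by omega]
  · rintro ⟨i, j, k⟩ - hne
    simp only [pkS]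
    rw [if_neg]
    intro h
    obtain ⟨rfl, rfl, rfl⟩ := pk_uniq h hE
    exact hne rfl
  · simp

lemma pk_unif_ae : ∀ᵐ u ∂unif01, u ∈ Ioo (0:ℝ) 1 := ae_restrict_mem measurableSet_Ioo

/-- product of uniforms -/
def pkU (m : ℕ) : Measure (Fin m → ℝ) := Measure.pi fun _ => unif01

instance (m : ℕ) : IsProbabilityMeasure (pkU m) := by unfold pkU; infer_instance

lemma pk_U_eq (m : ℕ) : pkU m = volume.restrict (univ.pi fun _ => Ioo (0:ℝ) 1) := by
  rw [pkU, volume_pi, Measure.restrict_pi_pi]; rfl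

lemma pk_U_ae (m : ℕ) : ∀ᵐ u ∂pkU m, ∀ i, u i ∈ Ioo (0:ℝ) 1 := by
  rw [pk_U_eq]
  filter_upwards [ae_restrict_mem (MeasurableSet.univ_pi fun _ => measurableSet_Ioo)] with u hu i
  exact hu i (mem_univ i)

lemma pk_U_inj (m : ℕ) : ∀ᵐ u ∂pkU m, Function.Injective u := by
  have h : ∀ i j : Fin m, i ≠ j → ∀ᵐ u ∂pkU m, u i ≠ u j := by
    intro i j hij
    rw [pk_U_eq]
    apply ae_restrict_of_ae
    let S : Submodule ℝ (Fin m → ℝ) :=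
      LinearMap.ker ((LinearMap.proj i : (Fin m → ℝ) →ₗ[ℝ] ℝ) - LinearMap.proj j)
    have hS : S ≠ ⊤ := by
      intro h
      have : (Pi.single i 1 : Fin m → ℝ) ∈ S := by rw [h]; trivial
      simp [S, LinearMap.mem_ker, hij.symm] at this
    have := Measure.addHaar_submodule volume S hS
    rw [ae_iff]
    convert this using 2
    ext u
    simp [S, LinearMap.mem_ker, sub_eq_zero]
  have h2 : ∀ᵐ u ∂pkU m, ∀ i j : Fin m, i ≠ j → u i ≠ u j := by
    rw [ae_all_iff]; intro i
    rw [ae_all_iff]; intro j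
    by_cases hij : i = j
    · simp [hij]
    · filter_upwards [h i j hij] with u hu _ using hu
  filter_upwards [h2] with u hu i j hij
  by_contra hne
  exact hu i j hne hij

/-- the inner function -/
def pkG (γ : ℝ) : ℝ × ℝ → ℝ := pkT.indicator (pkF γ)

lemma pk_measG (γ : ℝ) : Measurable (pkG γ) := (pk_measF γ).indicator pk_measT

lemma pk_G_int (γ : ℝ) : Integrable (pkG γ) := (integrable_indicator_iff pk_measT).2 (pk_F γ).1

lemma pk_G_zero (γ : ℝ) : ∫ p, pkG γ p = 0 := by
  rw [pkG, integral_indicator pk_measT, (pk_F γ).2]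

lemma pk_unif2 : unif01.prod unif01 = volume.restrict (Ioo (0:ℝ) 1 ×ˢ Ioo (0:ℝ) 1) := by
  rw [unif01, Measure.prod_restrict]; rfl

lemma pk_inner (γ : ℝ) {c : ℝ} (h0 : 0 < c) (h1 : c < 1) :
    Integrable (fun p => pkG γ (c⁻¹ • p)) (unif01.prod unif01) ∧
    ∫ p, pkG γ (c⁻¹ • p) ∂(unif01.prod unif01) = 0 ∧
    ∫ p, ‖pkG γ (c⁻¹ • p)‖ ∂(unif01.prod unif01) ≤ ∫ p, ‖pkG γ p‖ := by
  have hi : Integrable (fun p => pkG γ (c⁻¹ • p)) :=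
    (pk_G_int γ).comp_smul (inv_ne_zero h0.ne')
  have hsupp : ∀ p : ℝ × ℝ, p ∉ Ioo (0:ℝ) 1 ×ˢ Ioo (0:ℝ) 1 → pkG γ (c⁻¹ • p) = 0 := by
    intro p hp
    rw [pkG, indicator_of_notMem]
    rintro ⟨a1, a2, a3⟩
    simp only [Prod.smul_fst, Prod.smul_snd, smul_eq_mul] at a1 a2 a3
    have ic : 0 < c⁻¹ := inv_pos.2 h0
    have b1 : 0 < p.1 := pos_of_mul_pos_right a1 ic.le
    have b2 : p.1 < p.2 := lt_of_mul_lt_mul_left a2 ic.le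
    have b3 : p.2 < c := by
      rw [inv_mul_eq_div, div_lt_one h0] at a3; exact a3
    exact hp ⟨⟨b1, by linarith⟩, ⟨by linarith, by linarith⟩⟩
  rw [pk_unif2]
  refine ⟨hi.restrict, ?_, ?_⟩
  · rw [setIntegral_eq_integral_of_forall_compl_eq_zero hsupp, Measure.integral_comp_smul,
      pk_G_zero, smul_zero]
  · rw [setIntegral_eq_integral_of_forall_compl_eq_zero (fun p hp => by rw [hsupp p hp, norm_zero]),
      Measure.integral_comp_smul volume (fun p => ‖pkG γ p‖)]
    simp only [smul_eq_mul, Module.finrank_prod, Module.finrank_self]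
    have hB : 0 ≤ ∫ p, ‖pkG γ p‖ := integral_nonneg fun _ => norm_nonneg _
    have : |((c⁻¹) ^ (1 + 1))⁻¹| ≤ 1 := by
      rw [inv_pow, inv_inv, abs_of_nonneg (by positivity)]
      exact pow_le_one₀ h0.le h1.le
    exact mul_le_of_le_one_left hB this

lemma pk_fubini {β : Type*} [MeasurableSpace β] (ρ : Measure β) [IsProbabilityMeasure ρ]
    (γ : ℝ) (A : Set β) (hA : MeasurableSet A) (c : β → ℝ) (hc : Measurable c)
    (hA01 : ∀ w ∈ A, 0 < c w ∧ c w < 1) :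
    Integrable (fun q : (ℝ × ℝ) × β => if q.2 ∈ A then pkG γ ((c q.2)⁻¹ • q.1) else 0)
      ((unif01.prod unif01).prod ρ) ∧
    ∫ q : (ℝ × ℝ) × β, (if q.2 ∈ A then pkG γ ((c q.2)⁻¹ • q.1) else 0)
      ∂((unif01.prod unif01).prod ρ) = 0 := by
  have hmeas : Measurable
      (fun q : (ℝ × ℝ) × β => if q.2 ∈ A then pkG γ ((c q.2)⁻¹ • q.1) else 0) := by
    refine Measurable.ite (measurable_snd hA) ?_ measurable_const
    exact (pk_measG γ).comp ((hc.comp measurable_snd).inv.smul measurable_fst)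
  have hint : Integrable (fun q : (ℝ × ℝ) × β => if q.2 ∈ A then pkG γ ((c q.2)⁻¹ • q.1) else 0)
      ((unif01.prod unif01).prod ρ) := by
    rw [integrable_prod_iff' hmeas.aestronglyMeasurable]
    constructor
    · refine ae_of_all _ fun w => ?_
      by_cases hw : w ∈ A
      · simp only [hw, if_true]
        exact (pk_inner γ (hA01 w hw).1 (hA01 w hw).2).1
      · simp only [hw, if_false]
        exact integrable_zero _ _ _
    · refine Integrable.of_bound (C := ∫ p, ‖pkG γ p‖)
        (hmeas.norm.stronglyMeasurable.integral_prod_left').aestronglyMeasurable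
        (ae_of_all _ fun w => ?_)
      rw [Real.norm_of_nonneg (integral_nonneg fun _ => norm_nonneg _)]
      by_cases hw : w ∈ A
      · simp only [hw, if_true]
        exact (pk_inner γ (hA01 w hw).1 (hA01 w hw).2).2.2
      · simp only [hw, if_false, norm_zero, integral_zero]
        exact integral_nonneg fun _ => norm_nonneg _
  refine ⟨hint, ?_⟩
  rw [integral_prod_symm _ hint]
  refine integral_eq_zero_of_ae (ae_of_all _ fun w => ?_)
  by_cases hw : w ∈ A
  · simp only [hw, if_true]
    exact (pk_inner γ (hA01 w hw).1 (hA01 w hw).2).2.1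
  · simp [hw]

/-- the function integrated in `pk_fubini` -/
def pkH {β : Type*} (γ : ℝ) (A : Set β) (c : β → ℝ) (q : (ℝ × ℝ) × β) : ℝ :=
  if q.2 ∈ A then pkG γ ((c q.2)⁻¹ • q.1) else 0

lemma pk_triple (γ : ℝ) {m : ℕ} (i j k : Fin m) :
    Integrable (fun u => pkS γ i j k (fun l => hGamma γ (u l)⁻¹)) (pkU m) ∧
    ∫ u, pkS γ i j k (fun l => hGamma γ (u l)⁻¹) ∂(pkU m) = 0 := by
  by_cases hd : i ≠ j ∧ k ≠ i ∧ k ≠ j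
  swap
  · have : (fun u : Fin m → ℝ => pkS γ i j k (fun l => hGamma γ (u l)⁻¹)) = fun _ => 0 := by
      ext u
      rw [pkS, if_neg]
      rintro ⟨a, b, -⟩
      apply hd
      refine ⟨?_, ?_, ?_⟩ <;> rintro rfl <;> linarith
    rw [this]
    exact ⟨integrable_zero _ _ _, by simp⟩
  obtain ⟨hij, hki, hkj⟩ := hd
  have hind : iIndepFun (fun (l : Fin m) (u : Fin m → ℝ) => u l) (pkU m) :=
    iIndepFun_pi (X := fun _ => id) (fun _ => aemeasurable_id)
  have hl : ∀ l, (pkU m).map (fun u => u l) = unif01 := fun l =>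
    (measurePreserving_eval (fun _ : Fin m => unif01) l).map_eq
  set T : Finset (Fin m) := ({i, j} : Finset (Fin m))ᶜ with hT
  have hkT : k ∈ T := by simp [hT, hki, hkj]
  have ind2 := (hind.indepFun_finset {i, j} T (by rw [hT]; exact disjoint_compl_right)
    (fun l => measurable_pi_apply l))
  have ind3 : IndepFun (fun u : Fin m → ℝ => (u i, u j)) (fun u (l : T) => u l) (pkU m) :=
    ind2.comp (φ := fun v : ({i, j} : Finset (Fin m)) → ℝ => (v ⟨i, by simp⟩, v ⟨j, by simp⟩))
      (ψ := id) (by fun_prop) measurable_id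
  have ind4 : IndepFun (fun u : Fin m → ℝ => u i) (fun u => u j) (pkU m) := hind.indepFun hij
  set ρ := (pkU m).map (fun u (l : T) => u l) with hρ
  have mT : Measurable (fun (u : Fin m → ℝ) (l : T) => u l) := by fun_prop
  have : IsProbabilityMeasure ρ := Measure.isProbabilityMeasure_map mT.aemeasurable
  have mV : Measurable (fun u : Fin m → ℝ => ((u i, u j), (fun l : T => u l))) := by fun_prop
  have hV : (pkU m).map (fun u => ((u i, u j), (fun l : T => u l)))
      = (unif01.prod unif01).prod ρ := by
    have m1 : Measurable (fun u : Fin m → ℝ => u i) := measurable_pi_apply i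
    have m2 : Measurable (fun u : Fin m → ℝ => u j) := measurable_pi_apply j
    rw [(indepFun_iff_map_prod_eq_prod_map_map (m1.prodMk m2).aemeasurable
        mT.aemeasurable).1 ind3,
      (indepFun_iff_map_prod_eq_prod_map_map m1.aemeasurable m2.aemeasurable).1 ind4, hl, hl]
  let κ : T := ⟨k, hkT⟩
  let A : Set (T → ℝ) := {w | 0 < w κ ∧ w κ < 1 ∧ ∀ l : T, l ≠ κ → w κ < w l}
  have hA : MeasurableSet A := by
    have e : A = {w | 0 < w κ} ∩ ({w | w κ < 1} ∩ ⋂ l, ⋂ (_ : l ≠ κ), {w | w κ < w l}) := by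
      ext w; simp [A]
    rw [e]
    exact (measurableSet_lt measurable_const (measurable_pi_apply _)).inter
      ((measurableSet_lt (measurable_pi_apply _) measurable_const).inter
        (MeasurableSet.iInter fun l => MeasurableSet.iInter fun _ =>
          measurableSet_lt (measurable_pi_apply _) (measurable_pi_apply _)))
  obtain ⟨f1, f2⟩ : Integrable (pkH γ A (fun w => w κ)) ((unif01.prod unif01).prod ρ) ∧
      ∫ q, pkH γ A (fun w => w κ) q ∂((unif01.prod unif01).prod ρ) = 0 :=
    pk_fubini ρ γ A hA (fun w => w κ) (measurable_pi_apply _) (fun w hw => ⟨hw.1, hw.2.1⟩)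
  rw [← hV] at f1 f2
  have hae : (fun u : Fin m → ℝ => pkS γ i j k (fun l => hGamma γ (u l)⁻¹)) =ᵐ[pkU m]
      (pkH γ A (fun w => w κ)) ∘
        (fun u => ((u i, u j), (fun l : T => u l))) := by
    filter_upwards [pk_U_ae m] with u hu
    have hlt : ∀ a b : Fin m, hGamma γ (u a)⁻¹ < hGamma γ (u b)⁻¹ ↔ u b < u a := by
      intro a b
      rw [(pk_hmono γ).lt_iff_lt (by simpa using (hu a).1) (by simpa using (hu b).1)]
      exact inv_lt_inv₀ (hu a).1 (hu b).1
    have hk0 := (hu k).1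
    have hTm : (u k)⁻¹ • (u i, u j) ∈ pkT ↔ u i < u j ∧ u j < u k := by
      have e : (u k)⁻¹ • (u i, u j) = (u i / u k, u j / u k) := by
        simp [div_eq_inv_mul]
      rw [e]
      show 0 < u i / u k ∧ u i / u k < u j / u k ∧ u j / u k < 1 ↔ _
      rw [div_lt_div_iff_of_pos_right hk0, div_lt_one hk0]
      have := div_pos (hu i).1 hk0
      tauto
    have hAm : (fun l : T => u l) ∈ A ↔ ∀ l, l ≠ i → l ≠ j → l ≠ k → u k < u l := by
      constructor
      · rintro ⟨-, -, h⟩ l h1 h2 h3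
        exact h ⟨l, by simp [hT, h1, h2]⟩ (fun h => h3 (congrArg Subtype.val h))
      · intro h
        refine ⟨hk0, (hu k).2, fun l hl => ?_⟩
        have h4 := l.2
        simp only [hT, Finset.mem_compl, Finset.mem_insert, Finset.mem_singleton, not_or] at h4
        exact h l h4.1 h4.2 (fun h => hl (Subtype.ext h))
    have hE : pkE (fun l => hGamma γ (u l)⁻¹) i j k ↔
        (fun l : T => u l) ∈ A ∧ (u k)⁻¹ • (u i, u j) ∈ pkT := by
      rw [hTm, hAm]
      unfold pkE
      simp only [hlt]
      tauto
    show pkS γ i j k (fun l => hGamma γ (u l)⁻¹) =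
      pkH γ A (fun w => w κ) ((u i, u j), (fun l : T => u l))
    have hκ : u (κ : Fin m) = u k := rfl
    simp only [pkS, pkH, pkG, hκ]
    by_cases h : pkE (fun l => hGamma γ (u l)⁻¹) i j k
    · have h' := hE.1 h
      have h'' := hTm.1 h'.2
      rw [if_pos h, if_pos h'.1, indicator_of_mem h'.2, pk_KP γ (hu i).1 h''.1 h''.2]
      simp [div_eq_inv_mul]
    · rw [if_neg h]
      split_ifs with h1
      · rw [indicator_of_notMem]
        exact fun h2 => h (hE.2 ⟨h1, h2⟩)
      · rfl
  refine ⟨(f1.comp_measurable mV).congr hae.symm, ?_⟩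
  rw [integral_map mV.aemeasurable f1.aestronglyMeasurable] at f2
  rw [integral_congr_ae hae]
  exact f2

lemma pk_gp_eq (γ : ℝ) (m : ℕ) :
    gpPi γ m = (pkU m).map (fun u l => hGamma γ (u l)⁻¹) := by
  have hm : Measurable (fun u : ℝ => hGamma γ u⁻¹) := (measurable_hGamma γ).comp measurable_inv
  have h : gpMeasure γ = unif01.map (fun u => hGamma γ u⁻¹) := by
    rw [gpMeasure, pk_pareto, Measure.map_map (measurable_hGamma γ) measurable_inv]
    rfl
  have : IsProbabilityMeasure (unif01.map (fun u => hGamma γ u⁻¹)) :=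
    Measure.isProbabilityMeasure_map hm.aemeasurable
  rw [gpPi, h, pkU, Measure.pi_map_pi (f := fun _ u => hGamma γ u⁻¹) (fun _ => hm.aemeasurable)]

lemma pk_gp (γ : ℝ) {m : ℕ} (hm : 3 ≤ m) :
    Integrable (Km KP m) (gpPi γ m) ∧ ∫ x, Km KP m x ∂(gpPi γ m) = γ := by
  have mh : Measurable (fun (u : Fin m → ℝ) l => hGamma γ (u l)⁻¹) :=
    measurable_pi_lambda _ fun l =>
      (measurable_hGamma γ).comp (measurable_inv.comp (measurable_pi_apply l))
  have hS : ∀ p : Fin m × Fin m × Fin m, Integrable (pkS γ p.1 p.2.1 p.2.2) (gpPi γ m) ∧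
      ∫ x, pkS γ p.1 p.2.1 p.2.2 x ∂(gpPi γ m) = 0 := by
    intro p
    obtain ⟨a, b⟩ := pk_triple γ p.1 p.2.1 p.2.2
    rw [pk_gp_eq]
    constructor
    · rw [integrable_map_measure (pk_measS γ _ _ _).aestronglyMeasurable mh.aemeasurable]
      exact a
    · rw [integral_map mh.aemeasurable (pk_measS γ _ _ _).aestronglyMeasurable]
      exact b
  have hinj : ∀ᵐ x ∂(gpPi γ m), Function.Injective x := by
    have hms : MeasurableSet {x : Fin m → ℝ | Function.Injective x} := by
      have e : {x : Fin m → ℝ | Function.Injective x} =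
          ⋂ i, ⋂ j, ⋂ (_ : i ≠ j), {x : Fin m → ℝ | x i = x j}ᶜ := by
        ext x
        simp only [Function.Injective, mem_ofPred_eq, mem_iInter, mem_compl_iff]
        constructor
        · intro h i j hij e; exact hij (h e)
        · intro h i j e; by_contra hij; exact h i j hij e
      rw [e]
      exact MeasurableSet.iInter fun i => MeasurableSet.iInter fun j => MeasurableSet.iInter fun _ =>
        (measurableSet_eq_fun (measurable_pi_apply i) (measurable_pi_apply j)).compl
    rw [pk_gp_eq, ae_map_iff mh.aemeasurable hms]
    filter_upwards [pk_U_inj m, pk_U_ae m] with u hu h01 i j hij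
    apply hu
    apply inv_injective
    exact (pk_hmono γ).injOn (by simpa using (h01 i).1) (by simpa using (h01 j).1) hij
  have hae : (fun x => γ + ∑ p : Fin m × Fin m × Fin m, pkS γ p.1 p.2.1 p.2.2 x)
      =ᵐ[gpPi γ m] Km KP m := by
    filter_upwards [hinj] with x hx
    rw [← pk_Km γ hm hx]; ring
  have hsum : Integrable (fun x => ∑ p : Fin m × Fin m × Fin m, pkS γ p.1 p.2.1 p.2.2 x)
      (gpPi γ m) := integrable_finsetSum _ fun p _ => (hS p).1
  refine ⟨((integrable_const γ).add hsum).congr hae, ?_⟩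
  rw [← integral_congr_ae hae, integral_add (integrable_const γ) hsum,
    integral_finsetSum _ fun p _ => (hS p).1]
  simp [fun p => (hS p).2]

lemma pk_main {Ω : Type*} [MeasurableSpace Ω] (P : Measure Ω) [IsProbabilityMeasure P]
    (γ : ℝ) (m : ℕ) (hm : 3 ≤ m) (W : Fin m → Ω → ℝ) (hW : ∀ i, Measurable (W i))
    (hI : iIndepFun W P) (hD : ∀ i, Measure.map (W i) P = gpMeasure γ) :
    Integrable (fun ω => Km KP m (fun i => W i ω)) P ∧
      ∫ ω, Km KP m (fun i => W i ω) ∂P = γ := by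
  have hmap : P.map (fun ω i => W i ω) = gpPi γ m := by
    rw [(iIndepFun_iff_map_fun_eq_pi_map fun i => (hW i).aemeasurable).1 hI, gpPi]
    simp_rw [hD]
  have mW : Measurable (fun ω i => W i ω) := measurable_pi_lambda _ hW
  obtain ⟨a, b⟩ := pk_gp γ hm
  rw [← hmap] at a b
  refine ⟨a.comp_measurable mW, ?_⟩
  rw [integral_map mW.aemeasurable a.aestronglyMeasurable] at b
  exact b

/-- Proposition: unbiasedness of the extreme U-Pickands estimator for
GP samples. For iid standard `GP(γ)` variables `Z_1,…,Z_n` and `n ≥ m ≥ 3`,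
`E[K_{P,m}(Z_1,…,Z_m)] = γ`, and the corresponding U-statistic is an unbiased
estimator of `γ`. -/
theorem pickands_kernel_unbiased
    {Ω : Type*} [MeasurableSpace Ω] (P : Measure Ω) [IsProbabilityMeasure P]
    (γ : ℝ) (n m : ℕ) (hm : 3 ≤ m) (hmn : m ≤ n)
    (Z : Fin n → Ω → ℝ) (hZmeas : ∀ i, Measurable (Z i))
    (hIndep : iIndepFun Z P)
    (hDist : ∀ i, Measure.map (Z i) P = gpMeasure γ) :
    (∫ ω, Km KP m (fun i : Fin m => Z (Fin.castLE hmn i) ω) ∂P) = γ ∧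
    (∫ ω, UStat KP m n (fun i : Fin n => Z i ω) ∂P) = γ := by
  constructor
  · exact (pk_main P γ m hm (fun i => Z (Fin.castLE hmn i)) (fun i => hZmeas _)
      (hIndep.precomp (Fin.castLE_injective hmn)) (fun i => hDist _)).2
  · have key : ∀ I ∈ Finset.powersetCard m (Finset.univ : Finset (Fin n)),
        Integrable (fun ω => Km KP I.card fun j => Z (I.orderIsoOfFin rfl j).1 ω) P ∧
        ∫ ω, Km KP I.card (fun j => Z (I.orderIsoOfFin rfl j).1 ω) ∂P = γ := by
      intro I hI
      have hc : I.card = m := (Finset.mem_powersetCard.1 hI).2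
      exact pk_main P γ I.card (by omega) (fun j => Z (I.orderIsoOfFin rfl j).1)
        (fun _ => hZmeas _)
        (hIndep.precomp (Subtype.val_injective.comp (I.orderIsoOfFin rfl).injective))
        (fun _ => hDist _)
    unfold UStat
    rw [integral_const_mul, integral_finsetSum _ fun I hI => (key I hI).1,
      Finset.sum_congr rfl fun I hI => (key I hI).2]
    have hpos : (0:ℝ) < (n.choose m : ℝ) := by exact_mod_cast Nat.choose_pos hmn
    simp only [Finset.sum_const, Finset.card_powersetCard, Finset.card_univ, Fintype.card_fin,
      nsmul_eq_mul]
    field_simp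

end
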